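/- arXiv:1402.0299 — 3 statements merged into one kernel-verified Lean document; each statement's English description precedes it below -/
import Mathlib

section
/- For every x ∈ L and ordinal α with α+1 < κ, the slice y = x|_α = ⨆_α {x} satisfies: y =_α x (so [y]_α = [x]_α), y is the ≤-least element of [x]_α, and y ⊑_{α+1} z for all z ∈ [x]_α. -/
/-- `x =_α y` : the equivalence determined by the preorder `⊑_α`. -/
def eqa {L : Type*} (sq : Ordinal → L → L → Prop) (α : Ordinal) (x y : L) : Prop :=
  sq α x y ∧ sq α y x

/-- `x ⊏_α y` : `x ⊑_α y` but not `x =_α y`. -/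
def sqlt {L : Type*} (sq : Ordinal → L → L → Prop) (α : Ordinal) (x y : L) : Prop :=
  sq α x y ∧ ¬ eqa sq α x y

/-- `x ⊑ y` : `x ⊏_α y` for some `α < κ`, or `x = y`. -/
def sqle {L : Type*} (sq : Ordinal → L → L → Prop) (κ : Ordinal) (x y : L) : Prop :=
  (∃ α < κ, sqlt sq α x y) ∨ x = y

/-- `(x]_α = {y | ∀ β < α, x =_β y}`. -/
def seg {L : Type*} (sq : Ordinal → L → L → Prop) (α : Ordinal) (x : L) : Set L :=
  {y | ∀ β < α, eqa sq β x y}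

/-- `[x]_α = {y | x =_α y ∧ ∀ β < α, x =_β y}`. -/
def segcl {L : Type*} (sq : Ordinal → L → L → Prop) (α : Ordinal) (x : L) : Set L :=
  {y | eqa sq α x y ∧ ∀ β < α, eqa sq β x y}

/-- `y = ⨆_α X` (for `X ⊆ (x]_α`): the element specified by Axiom 3. -/
def IsLubA {L : Type*} [LE L] (sq : Ordinal → L → L → Prop) (α : Ordinal) (x : L)
    (X : Set L) (y : L) : Prop :=
  y ∈ seg sq α x ∧ (∀ z ∈ X, sq α z y) ∧
    ∀ w ∈ seg sq α x, (∀ z ∈ X, sq α z w) → sq α y w ∧ y ≤ w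

/-!
Reflexivity makes `x` an upper bound of `{x}` in `(x]_α`, so `⨆_α {x}` lies in `[x]_α` and is its
`≤`-least element. Since `[x]_α = (x]_{α+1}`, whose `≤`-least element is `⨆_{α+1} ∅`, the slice of
`x` at `α` is `⨆_{α+1} ∅`, and it inherits minimality for `⊑_{α+1}`.
-/

section

variable {L : Type*} {sq : Ordinal → L → L → Prop} {α : Ordinal} {x y : L}

lemma self_mem_segcl (hrefl : ∀ β ≤ α, sq β x x) : x ∈ segcl sq α x :=
  ⟨⟨hrefl α le_rfl, hrefl α le_rfl⟩, fun β hβ => ⟨hrefl β hβ.le, hrefl β hβ.le⟩⟩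

lemma seg_add_one (sq : Ordinal → L → L → Prop) (α : Ordinal) (x : L) :
    seg sq (α + 1) x = segcl sq α x := by
  ext y
  simp only [seg, segcl, Set.mem_ofPred_eq, Order.lt_add_one_iff, le_iff_eq_or_lt,
    forall_eq_or_imp]

namespace IsLubA

lemma isLeast_segcl [LE L] (hx : x ∈ segcl sq α x) (hy : IsLubA sq α x {x} y) :
    IsLeast (segcl sq α x) y := by
  obtain ⟨hy_mem, hy_upper, hy_least⟩ := hy
  simp only [Set.mem_singleton_iff, forall_eq] at hy_upper hy_least
  exact ⟨⟨⟨hy_upper, (hy_least x hx.2 hx.1.1).1⟩, hy_mem⟩,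
    fun z hz => (hy_least z hz.2 hz.1.1).2⟩

lemma isLeast_seg [LE L] (hy : IsLubA sq α x ∅ y) : IsLeast (seg sq α x) y :=
  ⟨hy.1, fun z hz => (hy.2.2 z hz (Set.forall_mem_empty.mpr trivial)).2⟩

lemma empty_of_singleton [PartialOrder L] (hx : x ∈ segcl sq α x)
    (hbot : ∃ u, IsLubA sq (α + 1) x ∅ u) (hy : IsLubA sq α x {x} y) :
    IsLubA sq (α + 1) x ∅ y := by
  obtain ⟨u, hu⟩ := hbot
  have hu_least : IsLeast (segcl sq α x) u := seg_add_one sq α x ▸ hu.isLeast_seg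
  exact hu_least.unique (hy.isLeast_segcl hx) ▸ hu

end IsLubA

end

theorem stmt_8_general {L : Type*} [PartialOrder L] (sq : Ordinal → L → L → Prop)
    {α : Ordinal} {x y : L} (hrefl : ∀ β ≤ α, sq β x x)
    (hbot : ∃ u, IsLubA sq (α + 1) x ∅ u) (hy : IsLubA sq α x {x} y) :
    eqa sq α x y ∧ y ∈ segcl sq α x ∧ (∀ z ∈ segcl sq α x, y ≤ z) ∧
      (∀ z ∈ segcl sq α x, sq (α + 1) y z) := by
  have hx : x ∈ segcl sq α x := self_mem_segcl hrefl
  obtain ⟨hy_mem, hy_le⟩ := hy.isLeast_segcl hx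
  obtain ⟨-, -, hy_sq⟩ := hy.empty_of_singleton hx hbot
  rw [seg_add_one] at hy_sq
  exact ⟨hy_mem.1, hy_mem, fun z hz => hy_le hz,
    fun z hz => (hy_sq z hz (Set.forall_mem_empty.mpr trivial)).1⟩

theorem stmt_8
    {L : Type*} [CompleteLattice L] {κ : Ordinal} (hκ : Order.IsSuccLimit κ)
    (sq : Ordinal → L → L → Prop)
    (hrefl : ∀ α < κ, ∀ x : L, sq α x x)
    (htrans : ∀ α < κ, ∀ x y z : L, sq α x y → sq α y z → sq α x z)
    (ax1 : ∀ α β : Ordinal, α < β → β < κ → ∀ x y : L, sq β x y → eqa sq α x y)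
    (ax2 : ∀ x y : L, (∀ α < κ, eqa sq α x y) → x = y)
    (ax3 : ∀ x : L, ∀ α < κ, ∀ X ⊆ seg sq α x, ∃ y : L, IsLubA sq α x X y)
    (ax4 : ∀ X : Set L, X.Nonempty → ∀ α < κ, ∀ y : L,
      (∀ x ∈ X, eqa sq α y x) → eqa sq α y (sSup X))
    {α : Ordinal} (hα : α < κ) {x y : L}
    (hy : IsLubA sq α x {x} y) :
    eqa sq α x y ∧ y ∈ segcl sq α x ∧ (∀ z ∈ segcl sq α x, y ≤ z) ∧
      (∀ z ∈ segcl sq α x, sq (α + 1) y z) :=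
  stmt_8_general sq (fun β hβ => hrefl β (hβ.trans_lt hα) x)
    (ax3 x (α + 1) (hκ.add_one_lt hα) ∅ (Set.empty_subset _)) hy
end

section
/- For all x, y ∈ L: x ≤ y iff x|_α ≤ y for all α < κ. Moreover, if for all α < κ there is some β < κ with x|_α ≤ y|_β, then x ≤ y; in particular, if x|_α ≤ y|_α for all α < κ, then x ≤ y. -/
/-!
The slice `x|_α` is the `≤`-least element of the class `[x]_α`. These classes shrink as `α` grows,
so the slices of `x` increase with `α`, and their supremum is unchanged when only indices `β ≥ α`
are kept. All of the remaining slices are `=_α`-equivalent to `x`, hence so is the supremum by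
Axiom 4; as `α` is arbitrary, Axiom 2 shows that `x` is the supremum of its slices.
-/

open Set

section Segments

variable {L : Type*} {sq : Ordinal → L → L → Prop} {α : Ordinal} {x y : L}

lemma mem_segcl_iff_forall_le : y ∈ segcl sq α x ↔ ∀ β ≤ α, eqa sq β x y := by
  simp only [segcl, mem_ofPred_eq, le_iff_eq_or_lt, or_imp, forall_and, forall_eq]

lemma segcl_antitone (sq : Ordinal → L → L → Prop) (x : L) :
    Antitone fun α ↦ segcl sq α x := by
  intro α β hαβ y hy
  rw [mem_segcl_iff_forall_le] at hy ⊢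
  exact fun γ hγ ↦ hy γ (hγ.trans hαβ)

lemma self_mem_seg (hrefl : ∀ β < α, sq β x x) : x ∈ seg sq α x :=
  fun β hβ ↦ ⟨hrefl β hβ, hrefl β hβ⟩

lemma IsLubA.isLeast_segcl_s12 [LE L] (hrefl : ∀ β ≤ α, sq β x x) (h : IsLubA sq α x {x} y) :
    IsLeast (segcl sq α x) y := by
  obtain ⟨hy_seg, hy_ub, hy_least⟩ := h
  have le_of_mem {z : L} (hz : z ∈ seg sq α x) (hxz : sq α x z) : sq α y z ∧ y ≤ z :=
    hy_least z hz (forall_eq.2 hxz)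
  have hyx : sq α y x := (le_of_mem (self_mem_seg fun β hβ ↦ hrefl β hβ.le) (hrefl α le_rfl)).1
  exact ⟨⟨⟨hy_ub x rfl, hyx⟩, hy_seg⟩, fun z hz ↦ (le_of_mem hz.2 hz.1.1).2⟩

end Segments

lemma sSup_image_Ico_eq_sSup_image_Iio {ι M : Type*} [LinearOrder ι]
    [CompleteSemilatticeSup M] {f : ι → M} {a b : ι} (hf : MonotoneOn f (Iio b)) (hab : a < b) :
    sSup (f '' Ico a b) = sSup (f '' Iio b) := by
  refine le_antisymm (sSup_le_sSup (image_mono Ico_subset_Iio_self)) (sSup_le ?_)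
  rintro _ ⟨c, hc, rfl⟩
  have hmax : max a c < b := max_lt hab hc
  calc
    f c ≤ f (max a c) := hf hc hmax (le_max_right a c)
    _ ≤ sSup (f '' Ico a b) := le_sSup (mem_image_of_mem f ⟨le_max_left a c, hmax⟩)

section Slices

variable {L : Type*} [CompleteSemilatticeSup L] {κ : Ordinal} {sq : Ordinal → L → L → Prop}

lemma eqa_sSup_image_of_isLeast_segcl
    (ax4 : ∀ X : Set L, X.Nonempty → ∀ α < κ, ∀ y : L,
      (∀ x ∈ X, eqa sq α y x) → eqa sq α y (sSup X))
    {x : L} {s : Ordinal → L} (hs : ∀ α < κ, IsLeast (segcl sq α x) (s α))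
    {α : Ordinal} (hα : α < κ) : eqa sq α x (sSup (s '' Iio κ)) := by
  have hmono : MonotoneOn s (Iio κ) := fun β hβ γ hγ hβγ ↦
    (hs γ hγ).mono (hs β hβ) (segcl_antitone sq x hβγ)
  rw [← sSup_image_Ico_eq_sSup_image_Iio hmono hα]
  refine ax4 _ ((nonempty_Ico.2 hα).image s) α hα x (forall_mem_image.2 ?_)
  exact fun β hβ ↦ mem_segcl_iff_forall_le.1 (hs β hβ.2).1 α hβ.1

lemma isLUB_image_of_isLeast_segcl
    (ax2 : ∀ x y : L, (∀ α < κ, eqa sq α x y) → x = y)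
    (ax4 : ∀ X : Set L, X.Nonempty → ∀ α < κ, ∀ y : L,
      (∀ x ∈ X, eqa sq α y x) → eqa sq α y (sSup X))
    {x : L} {s : Ordinal → L} (hs : ∀ α < κ, IsLeast (segcl sq α x) (s α)) :
    IsLUB (s '' Iio κ) x := by
  have hx : x = sSup (s '' Iio κ) :=
    ax2 _ _ fun α hα ↦ eqa_sSup_image_of_isLeast_segcl ax4 hs hα
  exact hx ▸ isLUB_sSup _

theorem stmt_12_general
    (hrefl : ∀ α < κ, ∀ x : L, sq α x x)
    (ax2 : ∀ x y : L, (∀ α < κ, eqa sq α x y) → x = y)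
    (ax4 : ∀ X : Set L, X.Nonempty → ∀ α < κ, ∀ y : L,
      (∀ x ∈ X, eqa sq α y x) → eqa sq α y (sSup X))
    {sl : Ordinal → L → L} (hsl : ∀ α < κ, ∀ x : L, IsLubA sq α x {x} (sl α x)) (x y : L) :
    (x ≤ y ↔ ∀ α < κ, sl α x ≤ y) ∧
      ((∀ α < κ, ∃ β < κ, sl α x ≤ sl β y) → x ≤ y) ∧
      ((∀ α < κ, sl α x ≤ sl α y) → x ≤ y) := by
  have hlub (z : L) : IsLUB ((sl · z) '' Iio κ) z :=
    isLUB_image_of_isLeast_segcl ax2 ax4 fun α hα ↦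
      (hsl α hα z).isLeast_segcl_s12 fun β hβ ↦ hrefl β (hβ.trans_lt hα) z
  have sl_le {β : Ordinal} (hβ : β < κ) : sl β y ≤ y := (hlub y).1 (mem_image_of_mem _ hβ)
  have le_iff : x ≤ y ↔ ∀ α < κ, sl α x ≤ y := (isLUB_le_iff (hlub x)).trans forall_mem_image
  have le_of_cofinal (h : ∀ α < κ, ∃ β < κ, sl α x ≤ sl β y) : x ≤ y :=
    le_iff.2 fun α hα ↦
      let ⟨_, hβ, hle⟩ := h α hα
      hle.trans (sl_le hβ)
  exact ⟨le_iff, le_of_cofinal, fun h ↦ le_of_cofinal fun α hα ↦ ⟨α, hα, h α hα⟩⟩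

end Slices

theorem stmt_12
    {L : Type*} [CompleteLattice L] {κ : Ordinal} (hκ : Order.IsSuccLimit κ)
    (sq : Ordinal → L → L → Prop)
    (hrefl : ∀ α < κ, ∀ x : L, sq α x x)
    (htrans : ∀ α < κ, ∀ x y z : L, sq α x y → sq α y z → sq α x z)
    (ax1 : ∀ α β : Ordinal, α < β → β < κ → ∀ x y : L, sq β x y → eqa sq α x y)
    (ax2 : ∀ x y : L, (∀ α < κ, eqa sq α x y) → x = y)
    (ax3 : ∀ x : L, ∀ α < κ, ∀ X ⊆ seg sq α x, ∃ y : L, IsLubA sq α x X y)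
    (ax4 : ∀ X : Set L, X.Nonempty → ∀ α < κ, ∀ y : L,
      (∀ x ∈ X, eqa sq α y x) → eqa sq α y (sSup X))
    (sl : Ordinal → L → L)
    (hsl : ∀ α < κ, ∀ x : L, IsLubA sq α x {x} (sl α x)) :
    ∀ x y : L,
      (x ≤ y ↔ ∀ α < κ, sl α x ≤ y) ∧
      ((∀ α < κ, ∃ β < κ, sl α x ≤ sl β y) → x ≤ y) ∧
      ((∀ α < κ, sl α x ≤ sl α y) → x ≤ y) :=
  stmt_12_general hrefl ax2 ax4 hsl
end

section
/- Suppose f : L → L is α-monotonic for every ordinal α < κ. Then f has a least pre-fixed point with respect to the partial order ⊑ (i.e., there exists x ∈ L with f(x) ⊑ x such that x ⊑ z for every z with f(z) ⊑ z), and this least pre-fixed point is also the least fixed point of f with respect to ⊑ (i.e., f(x) = x and x ⊑ z for every z with f(z) = z). -/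
/-!
Call `x` least fixed at level `α` if `f x =_α x` and `x ⊑_α z` for every `z ∈ (x]_α` with
`f z ⊑_α z`. An element that agrees below `α` with its image under `f` can be corrected so as to be
least fixed at level `α`, by the Knaster–Tarski argument inside its segment. Elements that are least
fixed at all levels up to `β` are `=_β`-equal, so the approximations found below a given level
cohere; replacing each by the `≤`-least member of its class makes them `≤`-increasing, and
Axiom 4 shows that their supremum agrees with each of them at its level. The element `x` obtained
at `κ` is fixed by Axiom 2, and it lies below every pre-fixed point `z` because `f z ⊑_α z` at the
first level `α` where `x` and `z` differ.
-/

section SupremumOfTail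

variable {ι L : Type*} [LinearOrder ι] {m : ι → L}

theorem directedOn_image_of_monotoneOn [Preorder L] {s : Set ι} (hm : MonotoneOn m s) :
    DirectedOn (· ≤ ·) (m '' s) :=
  directedOn_image.2 fun i hi j hj ↦
    have hmax : max i j ∈ s := max_rec' (· ∈ s) hi hj
    ⟨max i j, hmax, hm hi hmax (le_max_left i j), hm hj hmax (le_max_right i j)⟩

theorem sSup_image_Ico_eq_sSup_image_Iio_s18 [CompletePartialOrder L] {a b : ι}
    (hm : MonotoneOn m (Set.Iio a)) (hb : b < a) :
    sSup (m '' Set.Ico b a) = sSup (m '' Set.Iio a) := by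
  have tail_directed : DirectedOn (· ≤ ·) (m '' Set.Ico b a) :=
    directedOn_image_of_monotoneOn (hm.mono Set.Ico_subset_Iio_self)
  have cofinal : IsCofinalFor (m '' Set.Iio a) (m '' Set.Ico b a) := by
    rintro _ ⟨i, hi, rfl⟩
    have hmax : max b i < a := max_lt hb hi
    exact ⟨m (max b i), ⟨max b i, ⟨le_max_left b i, hmax⟩, rfl⟩, hm hi hmax (le_max_right b i)⟩
  exact tail_directed.isLUB_sSup.unique <|
    (directedOn_image_of_monotoneOn hm).isLUB_sSup.of_isCofinalFor
      (Set.image_mono Set.Ico_subset_Iio_self) cofinal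

end SupremumOfTail

section StratifiedPreorders

variable {L : Type*} {sq : Ordinal → L → L → Prop} {κ α β : Ordinal} {f : L → L} {x y z : L}

/-- A family of preorders `⊑_α`, `α < κ`, each of which refines the equivalences `=_β`, `β < α`, of
the earlier ones (Axiom 1). Nothing is required of `sq α` for `α ≥ κ`. -/
structure IsStratified (sq : Ordinal → L → L → Prop) (κ : Ordinal) : Prop where
  refl : ∀ α < κ, ∀ x, sq α x x
  trans : ∀ α < κ, ∀ x y z, sq α x y → sq α y z → sq α x z
  eqa_of_lt : ∀ α β, α < β → β < κ → ∀ x y, sq β x y → eqa sq α x y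

/-- `f` is `α`-monotonic: it preserves the single preorder `⊑_α`. The levels are kept separate
because a level may be treated using monotonicity at and below it only. -/
def AlphaMonotone (sq : Ordinal → L → L → Prop) (α : Ordinal) (f : L → L) : Prop :=
  ∀ x y, sq α x y → sq α (f x) (f y)

/-- `x` is a fixed point of `f` up to `=_α`, and is `⊑_α` every `α`-pre-fixed point of `f` in
`(x]_α`. This is the approximation at level `α` to being the least fixed point of `f`. -/
def IsLeastFixedAt (sq : Ordinal → L → L → Prop) (f : L → L) (α : Ordinal) (x : L) : Prop :=
  eqa sq α (f x) x ∧ ∀ z ∈ seg sq α x, sq α (f z) z → sq α x z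

theorem eqa.symm (hxy : eqa sq α x y) : eqa sq α y x :=
  And.symm hxy

theorem AlphaMonotone.eqa (hf : AlphaMonotone sq α f) (hxy : eqa sq α x y) :
    eqa sq α (f x) (f y) :=
  ⟨hf x y hxy.1, hf y x hxy.2⟩

namespace IsStratified

theorem eqa_refl (h : IsStratified sq κ) (hα : α < κ) (x : L) : eqa sq α x x :=
  ⟨h.refl α hα x, h.refl α hα x⟩

theorem eqa_trans (h : IsStratified sq κ) (hα : α < κ) (hxy : eqa sq α x y)
    (hyz : eqa sq α y z) : eqa sq α x z :=
  ⟨h.trans α hα _ _ _ hxy.1 hyz.1, h.trans α hα _ _ _ hyz.2 hxy.2⟩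

theorem eqa_of_le (h : IsStratified sq κ) (hβ : β ≤ α) (hα : α < κ) (hxy : eqa sq α x y) :
    eqa sq β x y := by
  rcases hβ.lt_or_eq with hlt | rfl
  · exact h.eqa_of_lt β α hlt hα x y hxy.1
  · exact hxy

theorem mem_seg_self (h : IsStratified sq κ) (hα : α ≤ κ) (x : L) : x ∈ seg sq α x :=
  fun _ hβ ↦ h.eqa_refl (hβ.trans_le hα) x

theorem mem_seg_of_eqa (h : IsStratified sq κ) (hα : α < κ) (hxy : eqa sq α x y) :
    y ∈ seg sq α x :=
  fun _ hβ ↦ h.eqa_of_le hβ.le hα hxy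

theorem seg_eq_of_mem (h : IsStratified sq κ) (hα : α ≤ κ) (hy : y ∈ seg sq α x) :
    seg sq α y = seg sq α x :=
  Set.Subset.antisymm
    (fun _ hz β hβ ↦ h.eqa_trans (hβ.trans_le hα) (hy β hβ) (hz β hβ))
    (fun _ hz β hβ ↦ h.eqa_trans (hβ.trans_le hα) (hy β hβ).symm (hz β hβ))

theorem sq_of_sqle_of_mem_seg (h : IsStratified sq κ) (hα : α < κ) (hxy : sqle sq κ x y)
    (hy : y ∈ seg sq α x) : sq α x y := by
  rcases hxy with ⟨γ, hγ, hlt⟩ | rfl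
  · rcases lt_trichotomy α γ with hαγ | rfl | hγα
    · exact (h.eqa_of_lt α γ hαγ hγ x y hlt.1).1
    · exact hlt.1
    · exact absurd (hy γ hγα) hlt.2
  · exact h.refl α hα x

theorem isLeast_of_isLubA_singleton [LE L] (h : IsStratified sq κ) (hα : α < κ)
    (hy : IsLubA sq α x {x} y) : IsLeast {w | eqa sq α x w} y := by
  obtain ⟨-, hub, hleast⟩ := hy
  refine ⟨⟨hub x rfl, (hleast x (h.mem_seg_self hα.le x) ?_).1⟩, fun w hw ↦
    (hleast w (h.mem_seg_of_eqa hα hw) ?_).2⟩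
  · rintro _ rfl
    exact h.refl α hα _
  · rintro _ rfl
    exact hw.1

theorem exists_eqa_of_coherent [CompletePartialOrder L] (h : IsStratified sq κ)
    (hleast : ∀ β < κ, ∀ x : L, ∃ m, IsLeast {w | eqa sq β x w} m)
    (hsup : ∀ X : Set L, X.Nonempty → DirectedOn (· ≤ ·) X → ∀ β < κ, ∀ y,
      (∀ x ∈ X, eqa sq β y x) → eqa sq β y (sSup X))
    (hα : α ≤ κ) {x : Ordinal → L} (hx : ∀ γ < α, ∀ β ≤ γ, eqa sq β (x β) (x γ)) :
    ∃ y, ∀ β < α, eqa sq β (x β) y := by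
  have hm : ∀ β < α, ∃ m, IsLeast {w | eqa sq β (x β) w} m :=
    fun β hβ ↦ hleast β (hβ.trans_le hα) (x β)
  choose! m m_eqa m_le using hm
  have x_eqa_m : ∀ γ < α, ∀ β ≤ γ, eqa sq β (x β) (m γ) := fun γ hγ β hβ ↦
    h.eqa_trans ((hβ.trans_lt hγ).trans_le hα) (hx γ hγ β hβ)
      (h.eqa_of_le hβ (hγ.trans_le hα) (m_eqa γ hγ))
  have m_mono : MonotoneOn m (Set.Iio α) :=
    fun β hβ γ hγ hβγ ↦ m_le β hβ (x_eqa_m γ hγ β hβγ)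
  refine ⟨sSup (m '' Set.Iio α), fun β hβ ↦ ?_⟩
  rw [← sSup_image_Ico_eq_sSup_image_Iio_s18 m_mono hβ]
  have tail_directed : DirectedOn (· ≤ ·) (m '' Set.Ico β α) :=
    directedOn_image_of_monotoneOn (m_mono.mono Set.Ico_subset_Iio_self)
  refine hsup _ ((Set.nonempty_Ico.2 hβ).image m) tail_directed β (hβ.trans_le hα) _ ?_
  rintro _ ⟨γ, ⟨hβγ, hγ⟩, rfl⟩
  exact x_eqa_m γ hγ β hβγ

end IsStratified

namespace IsLeastFixedAt

theorem of_eqa (h : IsStratified sq κ) (hα : α < κ) (hf : AlphaMonotone sq α f)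
    (hx : IsLeastFixedAt sq f α x) (hxy : eqa sq α x y) : IsLeastFixedAt sq f α y := by
  refine ⟨h.eqa_trans hα (hf.eqa hxy.symm) (h.eqa_trans hα hx.1 hxy), fun z hz hfz ↦ ?_⟩
  rw [h.seg_eq_of_mem hα.le (h.mem_seg_of_eqa hα hxy)] at hz
  exact h.trans α hα _ _ _ hxy.2 (hx.2 z hz hfz)

theorem eqa_of_forall_le (hx : ∀ γ ≤ β, IsLeastFixedAt sq f γ x)
    (hy : ∀ γ ≤ β, IsLeastFixedAt sq f γ y) : eqa sq β x y := by
  induction β using WellFoundedLT.induction with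
  | ind β ih =>
    have hseg : y ∈ seg sq β x := fun γ hγ ↦
      ih γ hγ (fun δ hδ ↦ hx δ (hδ.trans hγ.le)) (fun δ hδ ↦ hy δ (hδ.trans hγ.le))
    exact ⟨(hx β le_rfl).2 y hseg (hy β le_rfl).1.1,
      (hy β le_rfl).2 x (fun γ hγ ↦ (hseg γ hγ).symm) (hx β le_rfl).1.1⟩

end IsLeastFixedAt

namespace IsStratified

theorem map_mem_seg (h : IsStratified sq κ) (hα : α ≤ κ)
    (hf : ∀ β < α, AlphaMonotone sq β f) (hx : f x ∈ seg sq α x) (hy : y ∈ seg sq α x) :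
    f y ∈ seg sq α x :=
  fun β hβ ↦ h.eqa_trans (hβ.trans_le hα) (hx β hβ) ((hf β hβ).eqa (hy β hβ))

theorem exists_mem_seg_isLeastFixedAt [LE L] (h : IsStratified sq κ) (hα : α < κ)
    (hf : ∀ β ≤ α, AlphaMonotone sq β f)
    (hlub : ∀ X ⊆ seg sq α y, ∃ x, IsLubA sq α y X x) (hy : f y ∈ seg sq α y) :
    ∃ x ∈ seg sq α y, IsLeastFixedAt sq f α x := by
  have map_seg : ∀ w ∈ seg sq α y, f w ∈ seg sq α y :=
    fun w hw ↦ h.map_mem_seg hα.le (fun β hβ ↦ hf β hβ.le) hy hw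
  let prefixedLowerBounds : Set L :=
    {w ∈ seg sq α y | ∀ z ∈ seg sq α y, sq α (f z) z → sq α w z}
  obtain ⟨x, hx, hub, hleast⟩ := hlub prefixedLowerBounds fun w hw ↦ hw.1
  have x_sq : ∀ z ∈ seg sq α y, sq α (f z) z → sq α x z :=
    fun z hz hfz ↦ (hleast z hz fun w hw ↦ hw.2 z hz hfz).1
  have map_x_sq : sq α (f x) x := hub (f x) ⟨map_seg x hx, fun z hz hfz ↦
    h.trans α hα _ _ _ (hf α le_rfl x z (x_sq z hz hfz)) hfz⟩
  have x_sq_map : sq α x (f x) := x_sq (f x) (map_seg x hx) (hf α le_rfl _ _ map_x_sq)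
  refine ⟨x, hx, ⟨map_x_sq, x_sq_map⟩, ?_⟩
  rwa [h.seg_eq_of_mem hα.le hx]

theorem exists_forall_lt_isLeastFixedAt [CompletePartialOrder L] (h : IsStratified sq κ)
    (hlub : ∀ x : L, ∀ β < κ, ∀ X ⊆ seg sq β x, ∃ y, IsLubA sq β x X y)
    (hsup : ∀ X : Set L, X.Nonempty → DirectedOn (· ≤ ·) X → ∀ β < κ, ∀ y,
      (∀ x ∈ X, eqa sq β y x) → eqa sq β y (sSup X))
    (hf : ∀ β < κ, AlphaMonotone sq β f) (hα : α ≤ κ) :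
    ∃ x, ∀ β < α, IsLeastFixedAt sq f β x := by
  induction α using WellFoundedLT.induction with
  | ind α ih =>
    have approx : ∀ β < α, ∃ x, ∀ γ ≤ β, IsLeastFixedAt sq f γ x := by
      intro β hβ
      have hβκ : β < κ := hβ.trans_le hα
      obtain ⟨y, hy⟩ := ih β hβ hβκ.le
      obtain ⟨x, hxy, hx⟩ := h.exists_mem_seg_isLeastFixedAt hβκ
        (fun γ hγ ↦ hf γ (hγ.trans_lt hβκ)) (hlub y β hβκ) fun γ hγ ↦ (hy γ hγ).1.symm
      refine ⟨x, fun γ hγ ↦ ?_⟩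
      rcases hγ.lt_or_eq with hlt | rfl
      · exact (hy γ hlt).of_eqa h (hlt.trans hβκ) (hf γ (hlt.trans hβκ)) (hxy γ hlt)
      · exact hx
    choose! x hx using approx
    have coherent : ∀ γ < α, ∀ β ≤ γ, eqa sq β (x β) (x γ) := fun γ hγ β hβ ↦
      IsLeastFixedAt.eqa_of_forall_le (hx β (hβ.trans_lt hγ)) fun δ hδ ↦ hx γ hγ δ (hδ.trans hβ)
    have hleast : ∀ β < κ, ∀ x : L, ∃ m, IsLeast {w | eqa sq β x w} m := fun β hβ x ↦
      (hlub x β hβ {x} (Set.singleton_subset_iff.2 (h.mem_seg_self hβ.le x))).imp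
        fun _ ↦ h.isLeast_of_isLubA_singleton hβ
    obtain ⟨y, hy⟩ := h.exists_eqa_of_coherent hleast hsup hα coherent
    exact ⟨y, fun β hβ ↦ (hx β hβ β le_rfl).of_eqa h (hβ.trans_le hα)
      (hf β (hβ.trans_le hα)) (hy β hβ)⟩

end IsStratified

theorem exists_mem_seg_not_eqa (hsep : ∀ x y : L, (∀ α < κ, eqa sq α x y) → x = y)
    (hxy : x ≠ y) : ∃ α < κ, y ∈ seg sq α x ∧ ¬ eqa sq α x y := by
  by_contra! heqa
  refine hxy (hsep x y fun α ↦ ?_)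
  induction α using WellFoundedLT.induction with
  | ind α ih => exact fun hα ↦ heqa α hα fun β hβ ↦ ih β hβ (hβ.trans hα)

theorem IsStratified.sqle_of_forall_isLeastFixedAt (h : IsStratified sq κ)
    (hsep : ∀ x y : L, (∀ α < κ, eqa sq α x y) → x = y)
    (hf : ∀ α < κ, AlphaMonotone sq α f) (hx : ∀ α < κ, IsLeastFixedAt sq f α x)
    (hz : sqle sq κ (f z) z) : sqle sq κ x z := by
  by_cases hxz : x = z
  · exact Or.inr hxz
  obtain ⟨α, hα, hzx, hne⟩ := exists_mem_seg_not_eqa hsep hxz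
  have map_z_mem : f z ∈ seg sq α x :=
    h.map_mem_seg hα.le (fun β hβ ↦ hf β (hβ.trans hα))
      (fun β hβ ↦ (hx β (hβ.trans hα)).1.symm) hzx
  have map_z_sq : sq α (f z) z :=
    h.sq_of_sqle_of_mem_seg hα hz (by rwa [h.seg_eq_of_mem hα.le map_z_mem])
  exact Or.inl ⟨α, hα, (hx α hα).2 z hzx map_z_sq, hne⟩

end StratifiedPreorders

theorem stmt_18_general
    {L : Type*} [CompletePartialOrder L] {κ : Ordinal} {sq : Ordinal → L → L → Prop}
    (h : IsStratified sq κ)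
    (hsep : ∀ x y : L, (∀ α < κ, eqa sq α x y) → x = y)
    (hlub : ∀ x : L, ∀ α < κ, ∀ X ⊆ seg sq α x, ∃ y : L, IsLubA sq α x X y)
    (hsup : ∀ X : Set L, X.Nonempty → DirectedOn (· ≤ ·) X → ∀ α < κ, ∀ y : L,
      (∀ x ∈ X, eqa sq α y x) → eqa sq α y (sSup X))
    {f : L → L} (hf : ∀ α < κ, AlphaMonotone sq α f) :
    ∃ x : L, sqle sq κ (f x) x ∧
      (∀ z : L, sqle sq κ (f z) z → sqle sq κ x z) ∧
      f x = x ∧ (∀ z : L, f z = z → sqle sq κ x z) := by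
  obtain ⟨x, hx⟩ := h.exists_forall_lt_isLeastFixedAt hlub hsup hf le_rfl
  have fixed : f x = x := hsep _ _ fun α hα ↦ (hx α hα).1
  have least : ∀ z, sqle sq κ (f z) z → sqle sq κ x z :=
    fun _ ↦ h.sqle_of_forall_isLeastFixedAt hsep hf hx
  exact ⟨x, Or.inr fixed, least, fixed, fun z hz ↦ least z (Or.inr hz)⟩

theorem stmt_18
    {L : Type*} [CompleteLattice L] {κ : Ordinal} (hκ : Order.IsSuccLimit κ)
    (sq : Ordinal → L → L → Prop)
    (hrefl : ∀ α < κ, ∀ x : L, sq α x x)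
    (htrans : ∀ α < κ, ∀ x y z : L, sq α x y → sq α y z → sq α x z)
    (ax1 : ∀ α β : Ordinal, α < β → β < κ → ∀ x y : L, sq β x y → eqa sq α x y)
    (ax2 : ∀ x y : L, (∀ α < κ, eqa sq α x y) → x = y)
    (ax3 : ∀ x : L, ∀ α < κ, ∀ X ⊆ seg sq α x, ∃ y : L, IsLubA sq α x X y)
    (ax4 : ∀ X : Set L, X.Nonempty → ∀ α < κ, ∀ y : L,
      (∀ x ∈ X, eqa sq α y x) → eqa sq α y (sSup X))
    (f : L → L)
    (hf : ∀ α < κ, ∀ x y : L, sq α x y → sq α (f x) (f y)) :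
    ∃ x : L, sqle sq κ (f x) x ∧
      (∀ z : L, sqle sq κ (f z) z → sqle sq κ x z) ∧
      f x = x ∧ (∀ z : L, f z = z → sqle sq κ x z) := by
  exact stmt_18_general ⟨hrefl, htrans, ax1⟩ ax2 ax3 (fun X hX _ ↦ ax4 X hX) hf
end
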